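/- arXiv:2503.03448 — 4 statements merged into one kernel-verified Lean document; each statement's English description precedes it below -/
import Mathlib

section
/- Let n ≥ 5 be a real number and k ≥ 1 an integer. Then S_{2k}(√n) > 0 and the quantity c_k := S_{2k}'(√n) / (2√n · S_{2k}(√n)) satisfies k/n ≤ c_k ≤ k/(√n(√n − 2)). (This is the two-sided estimate for the eigenvalues λ_k = −c_k of the generator of the heat semigroup on Aut⁺(B) with dim B = n.) -/
open Polynomial

/-- The (dilated) Chebyshev polynomials of the second kind:
`S 0 = 1`, `S 1 = X`, `S (k+2) = X * S (k+1) - S k`. -/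
noncomputable def S : ℕ → Polynomial ℝ
  | 0 => 1
  | 1 => Polynomial.X
  | (k + 2) => Polynomial.X * S (k + 1) - S k

theorem S_aux (x : ℝ) (hx : 2 < x) (m : ℕ) :
    0 < (S m).eval x ∧ (S m).eval x ≤ (S (m+1)).eval x ∧ (S (m+1)).eval x ≤ x * (S m).eval x ∧
    (S m).eval x ^ 2 ≤ (S (m+1)).derivative.eval x * (S m).eval x
      - (S m).derivative.eval x * (S (m+1)).eval x ∧
    (x - 2) * ((S (m+1)).derivative.eval x * (S m).eval x
      - (S m).derivative.eval x * (S (m+1)).eval x) ≤ (S m).eval x * (S (m+1)).eval x ∧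
    m * (S m).eval x ≤ x * (S m).derivative.eval x ∧
    (x - 2) * (S m).derivative.eval x ≤ m * (S m).eval x := by
  induction m with
  | zero =>
    simp [S]
    linarith
  | succ m ih =>
    have e1 : (S (m+1+1)).eval x = x * (S (m+1)).eval x - (S m).eval x := by simp [S]
    have e2 : (S (m+1+1)).derivative.eval x
        = (S (m+1)).eval x + x * (S (m+1)).derivative.eval x - (S m).derivative.eval x := by
      simp [S]
    rw [e1, e2]
    generalize (S (m+1)).eval x = b at *
    generalize (S m).eval x = a at *
    generalize (S (m+1)).derivative.eval x = b' at *
    generalize (S m).derivative.eval x = a' at *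
    obtain ⟨h1, h2, h3, h4, h5, h6, h7⟩ := ih
    have hb : 0 < b := by linarith
    push_cast
    refine ⟨hb, by nlinarith, by linarith, by nlinarith, ?_, ?_, ?_⟩
    · nlinarith [mul_nonneg hb.le (sub_nonneg.2 h2)]
    · have hA : a * b ≤ x * (b' * a - a' * b) := by
        nlinarith [mul_le_mul_of_nonneg_left h3 h1.le,
          mul_le_mul_of_nonneg_left h4 (by linarith : 0 ≤ x)]
      have hB := mul_le_mul_of_nonneg_left h6 hb.le
      refine le_of_mul_le_mul_left ?_ h1
      nlinarith
    · have hB := mul_le_mul_of_nonneg_left h7 hb.le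
      refine le_of_mul_le_mul_left ?_ h1
      nlinarith

/-- For a real number `n ≥ 5` and an integer `k ≥ 1`, one has `S_{2k}(√n) > 0` and the quantity
`c_k = S_{2k}'(√n) / (2√n · S_{2k}(√n))` satisfies `k/n ≤ c_k ≤ k/(√n(√n − 2))`. -/
theorem heat_semigroup_eigenvalue_estimate (n : ℝ) (hn : 5 ≤ n) (k : ℕ) (hk : 1 ≤ k) :
    0 < (S (2 * k)).eval (Real.sqrt n) ∧
    (k : ℝ) / n ≤
      (S (2 * k)).derivative.eval (Real.sqrt n) /
        (2 * Real.sqrt n * (S (2 * k)).eval (Real.sqrt n)) ∧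
    (S (2 * k)).derivative.eval (Real.sqrt n) /
        (2 * Real.sqrt n * (S (2 * k)).eval (Real.sqrt n)) ≤
      (k : ℝ) / (Real.sqrt n * (Real.sqrt n - 2)) := by
  have hx : 2 < Real.sqrt n := by
    rw [Real.lt_sqrt (by norm_num)]; linarith
  have hs : Real.sqrt n * Real.sqrt n = n := Real.mul_self_sqrt (by linarith)
  obtain ⟨h1, -, -, -, -, h6, h7⟩ := S_aux _ hx (2 * k)
  push_cast at h6 h7
  generalize Real.sqrt n = x at *
  subst hs
  have hx0 : 0 < x := by linarith
  have hx2 : 0 < x - 2 := by linarith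
  refine ⟨h1, ?_, ?_⟩
  · rw [div_le_div_iff₀ (by positivity) (by positivity)]
    nlinarith [mul_le_mul_of_nonneg_left h6 hx0.le]
  · rw [div_le_div_iff₀ (by positivity) (by positivity)]
    nlinarith [mul_le_mul_of_nonneg_left h7 hx0.le]
end

section
/- Let d₀ := (log(11 + √105) − log 2)/log 3. For every integer k ≥ 1, the function φ_k(p) = (p−1)^{1−d₀k} · (2k+1)^{2−4/p} is nonincreasing on the interval [2, ∞). -/
/-- The constant `d₀ = (log(11 + √105) − log 2)/log 3`. -/
noncomputable def d₀ : ℝ := (Real.log (11 + Real.sqrt 105) - Real.log 2) / Real.log 3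

lemma aux_log3 : Real.log 3 ≤ 1.1 := by
  have h : Real.log ((3:ℝ) ^ 10) ≤ Real.log (Real.exp 1 ^ 11) := by
    apply Real.log_le_log (by norm_num)
    have h1 : (2.718:ℝ) ≤ Real.exp 1 := by linarith [Real.exp_one_gt_d9]
    calc (3:ℝ)^10 ≤ 2.718 ^ 11 := by norm_num
      _ ≤ _ := by gcongr
  rw [Real.log_pow, Real.log_pow, Real.log_exp] at h
  norm_num at h ⊢
  linarith

lemma aux_d0 : 2.1 ≤ d₀ := by
  have h3 : 0 < Real.log 3 := Real.log_pos (by norm_num)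
  have hs : (10.2:ℝ) ≤ Real.sqrt 105 := Real.le_sqrt_of_sq_le (by norm_num)
  unfold d₀
  rw [← Real.log_div (by positivity) (by norm_num), le_div_iff₀ h3]
  have h : Real.log ((3:ℝ) ^ 21) ≤ Real.log (((11 + Real.sqrt 105) / 2) ^ 10) := by
    apply Real.log_le_log (by norm_num)
    calc (3:ℝ)^21 ≤ 10.6 ^ 10 := by norm_num
      _ ≤ _ := by
        gcongr
        linarith
  rw [Real.log_pow, Real.log_pow] at h
  norm_num at h ⊢
  linarith

lemma aux_L (k : ℕ) (hk : 1 ≤ k) : Real.log (2 * (k:ℝ) + 1) ≤ d₀ * k - 1 := by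
  have hk' : (1:ℝ) ≤ k := by exact_mod_cast hk
  have h1 : Real.log ((2 * (k:ℝ) + 1) / 3) ≤ (2 * (k:ℝ) + 1) / 3 - 1 :=
    Real.log_le_sub_one_of_pos (by positivity)
  rw [Real.log_div (by positivity) (by norm_num)] at h1
  have h3 := aux_log3
  have h4 : 2.1 * (k:ℝ) ≤ d₀ * k := by gcongr; exact aux_d0
  norm_num at h3 h4
  linarith

/-- For every integer `k ≥ 1`, the function `φ_k(p) = (p−1)^{1−d₀k} (2k+1)^{2−4/p}` is
nonincreasing on `[2, ∞)`. -/
theorem phi_antitone (k : ℕ) (hk : 1 ≤ k) :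
    AntitoneOn
      (fun p : ℝ => (p - 1) ^ (1 - d₀ * (k : ℝ)) * (2 * (k : ℝ) + 1) ^ (2 - 4 / p))
      (Set.Ici 2) := by
  intro p hp q hq hpq
  simp only [Set.mem_Ici] at hp hq
  have hL := aux_L k hk
  have hL0 : 0 ≤ Real.log (2 * (k:ℝ) + 1) :=
    Real.log_nonneg (by linarith [Nat.cast_nonneg (α := ℝ) k])
  have hp1 : 0 < p - 1 := by linarith
  have hq1 : 0 < q - 1 := by linarith
  have hb : 0 < 2 * (k:ℝ) + 1 := by positivity
  have hlog : 4 / p - 4 / q ≤ Real.log (q - 1) - Real.log (p - 1) := by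
    have h := Real.le_log_one_add_of_nonneg (x := (q - p) / (p - 1))
      (div_nonneg (by linarith) hp1.le)
    have e : 1 + (q - p) / (p - 1) = (q - 1) / (p - 1) := by field_simp; ring
    rw [e, Real.log_div hq1.ne' hp1.ne'] at h
    refine le_trans ?_ h
    have e2 : 2 * ((q - p) / (p - 1)) / ((q - p) / (p - 1) + 2) = 2 * (q - p) / (q + p - 2) := by
      have : (q - p) / (p - 1) + 2 = (q + p - 2) / (p - 1) := by field_simp; ring
      rw [this]
      have : q + p - 2 ≠ 0 := by linarith
      field_simp
    have e3 : 4 / p - 4 / q = 4 * (q - p) / (p * q) := by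
      have : p ≠ 0 := by linarith
      have : q ≠ 0 := by linarith
      field_simp
    rw [e2, e3, div_le_div_iff₀ (by nlinarith) (by linarith)]
    nlinarith [mul_nonneg (sub_nonneg.2 hpq) (mul_nonneg (sub_nonneg.2 hp) (sub_nonneg.2 hq))]
  have hD : 0 ≤ Real.log (q - 1) - Real.log (p - 1) :=
    sub_nonneg.2 (Real.log_le_log hp1 (by linarith))
  simp only [Real.rpow_def_of_pos hp1, Real.rpow_def_of_pos hq1, Real.rpow_def_of_pos hb,
    ← Real.exp_add]
  apply Real.exp_le_exp.2
  have m1 := mul_le_mul_of_nonneg_left hlog hL0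
  have m2 := mul_le_mul_of_nonneg_right hL hD
  linarith
end

section
/- Let d₀ := (log(11 + √105) − log 2)/log 3. Then for every real number p ≥ 4, the series R_p := ∑_{k=1}^{∞} (p−1)^{1−d₀k} (2k+1)^{2−4/p} converges and R_p ≤ 1, with equality R_4 = 1 at p = 4. -/
lemma aux_c : (3:ℝ) ^ d₀ = (11 + Real.sqrt 105) / 2 := by
  have h3 : Real.log 3 ≠ 0 := (Real.log_pos (by norm_num)).ne'
  have hs := Real.sqrt_nonneg 105
  rw [Real.rpow_def_of_pos (by norm_num), d₀, mul_div_cancel₀ _ h3,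
    ← Real.log_div (by positivity) (by norm_num), Real.exp_log (by positivity)]

lemma aux_sqrt : (10.2:ℝ) ≤ Real.sqrt 105 := by
  apply Real.le_sqrt_of_sq_le; norm_num

lemma aux_d : (2.1:ℝ) ≤ d₀ := by
  have h3 : 0 < Real.log 3 := Real.log_pos (by norm_num)
  have h : Real.log ((3:ℝ)^21) ≤ Real.log ((10.6:ℝ)^10) :=
    Real.log_le_log (by norm_num) (by norm_num)
  have h2 : Real.log (10.6:ℝ) ≤ Real.log ((3:ℝ)^d₀) := by
    apply Real.log_le_log (by norm_num)
    rw [aux_c]; linarith [aux_sqrt]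
  rw [Real.log_pow, Real.log_pow] at h
  rw [Real.log_rpow (by norm_num)] at h2
  push_cast at h
  have : 2.1 * Real.log 3 ≤ d₀ * Real.log 3 := by linarith
  exact le_of_mul_le_mul_right this h3

lemma aux_log (k : ℝ) (hk : 0 ≤ k) :
    Real.log (2 * (k + 1) + 1) ≤ d₀ * (k + 1) - 1 := by
  have h1 : Real.log (2 * (k + 1) + 1) = Real.log 3 + Real.log ((2 * (k + 1) + 1) / 3) := by
    rw [← Real.log_mul (by norm_num) (by positivity)]
    congr 1; ring
  have h2 := Real.log_le_sub_one_of_pos (show 0 < (2 * (k + 1) + 1) / 3 by positivity)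
  nlinarith [aux_d, aux_log3]

lemma aux_term (p : ℝ) (hp : 4 ≤ p) (k : ℕ) :
    (p - 1) ^ (1 - d₀ * ((k : ℝ) + 1)) * (2 * ((k : ℝ) + 1) + 1) ^ (2 - 4 / p) ≤
    ((4 : ℝ) - 1) ^ (1 - d₀ * ((k : ℝ) + 1)) *
        (2 * ((k : ℝ) + 1) + 1) ^ (2 - 4 / (4 : ℝ)) := by
  have hk : (0:ℝ) ≤ k := k.cast_nonneg
  have hp1 : 0 < p - 1 := by linarith
  have hL := aux_log k hk
  have hm : (0:ℝ) < 2 * ((k : ℝ) + 1) + 1 := by positivity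
  have hL0 : 0 ≤ Real.log (2 * ((k : ℝ) + 1) + 1) := Real.log_nonneg (by linarith)
  rw [Real.rpow_def_of_pos hp1, Real.rpow_def_of_pos hm, Real.rpow_def_of_pos (by norm_num),
    Real.rpow_def_of_pos hm, ← Real.exp_add, ← Real.exp_add]
  apply Real.exp_le_exp.mpr
  have h1 := Real.one_sub_inv_le_log_of_pos (show 0 < (p - 1) / 3 by positivity)
  rw [Real.log_div hp1.ne' (by norm_num)] at h1
  have h2 : 1 - 4 / p ≤ 1 - ((p - 1) / 3)⁻¹ := by
    rw [inv_div]
    have : 3 / (p - 1) ≤ 4 / p := by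
      rw [div_le_div_iff₀ hp1 (by linarith)]; linarith
    linarith
  have h0 : 0 ≤ 1 - 4 / p := by
    have : 4 / p ≤ 1 := by rw [div_le_one (by linarith)]; exact hp
    linarith
  have h3 := mul_le_mul hL (h2.trans h1) h0 (hL0.trans hL)
  norm_num at *
  linarith

lemma aux_sum : HasSum (fun k : ℕ => ((4 : ℝ) - 1) ^ (1 - d₀ * ((k : ℝ) + 1)) *
        (2 * ((k : ℝ) + 1) + 1) ^ (2 - 4 / (4 : ℝ))) 1 := by
  have hs := aux_sqrt
  have hs2 : Real.sqrt 105 ^ 2 = 105 := Real.sq_sqrt (by norm_num)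
  obtain ⟨x, hx⟩ : ∃ x : ℝ, x = ((3:ℝ) ^ d₀)⁻¹ := ⟨_, rfl⟩
  have hx' : x = (11 - Real.sqrt 105) / 8 := by
    rw [hx, aux_c]
    apply inv_eq_of_mul_eq_one_right
    nlinarith
  have hs' : Real.sqrt 105 ≤ 10.9 := Real.sqrt_le_iff.mpr (by norm_num)
  have hx0 : 0 < x := by rw [hx']; linarith
  have hx1 : x < 1 := by rw [hx']; linarith
  have hq : 4 * x ^ 2 - 11 * x + 1 = 0 := by rw [hx']; nlinarith
  have hn : ‖x‖ < 1 := by rwa [Real.norm_eq_abs, abs_of_pos hx0]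
  have h := ((hasSum_coe_mul_geometric_of_norm_lt_one hn).mul_left (6 * x)).add
    ((hasSum_geometric_of_norm_lt_one hn).mul_left (9 * x))
  have hv : 6 * x * (x / (1 - x) ^ 2) + 9 * x * (1 - x)⁻¹ = 1 := by
    have : 1 - x ≠ 0 := by linarith
    field_simp
    linear_combination -hq
  rw [hv] at h
  have hf : (fun k : ℕ => ((4 : ℝ) - 1) ^ (1 - d₀ * ((k : ℝ) + 1)) *
        (2 * ((k : ℝ) + 1) + 1) ^ (2 - 4 / (4 : ℝ))) =
      fun b : ℕ => 6 * x * (b * x ^ b) + 9 * x * x ^ b := by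
    funext k
    have e : (3:ℝ) ^ (1 - d₀ * ((k : ℝ) + 1)) = 3 * x ^ (k + 1) := by
      rw [Real.rpow_sub (by norm_num), Real.rpow_one, Real.rpow_mul (by norm_num), hx, inv_pow,
        div_eq_mul_inv]
      congr 2
      exact_mod_cast Real.rpow_natCast ((3:ℝ)^d₀) (k+1)
    norm_num
    rw [e]; ring
  rw [hf]; exact h

/-- For every real `p ≥ 4`, the series `R_p = ∑_{k=1}^∞ (p−1)^{1−d₀k} (2k+1)^{2−4/p}`
converges and satisfies `R_p ≤ 1`, with equality `R_4 = 1` at `p = 4`. -/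
theorem R_p_le_one :
    (∀ p : ℝ, 4 ≤ p →
      Summable (fun k : ℕ =>
        (p - 1) ^ (1 - d₀ * ((k : ℝ) + 1)) * (2 * ((k : ℝ) + 1) + 1) ^ (2 - 4 / p)) ∧
      (∑' k : ℕ,
        (p - 1) ^ (1 - d₀ * ((k : ℝ) + 1)) * (2 * ((k : ℝ) + 1) + 1) ^ (2 - 4 / p)) ≤ 1) ∧
    (∑' k : ℕ,
      ((4 : ℝ) - 1) ^ (1 - d₀ * ((k : ℝ) + 1)) *
        (2 * ((k : ℝ) + 1) + 1) ^ (2 - 4 / (4 : ℝ))) = 1 := by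
  refine ⟨fun p hp => ?_, aux_sum.tsum_eq⟩
  have hS := Summable.of_nonneg_of_le (fun k : ℕ => by
    have : 0 < p - 1 := by linarith
    positivity) (aux_term p hp) aux_sum.summable
  exact ⟨hS, (hS.tsum_le_tsum (aux_term p hp) aux_sum.summable).trans aux_sum.tsum_eq.le⟩
end

section
/- Let c : ℕ → ℝ be a sequence with c(0) ≥ 0 and suppose there exist real constants 0 < A ≤ B such that A·k ≤ c(k) ≤ B·k for all integers k ≥ 1. Then for a real number s, sup_{t > 0} { t^s · ∑_{k=0}^{∞} (1+k)² e^{−2t(1+c(k))} } < ∞ if and only if s ≥ 3. -/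
theorem aux_le (c : ℕ → ℝ) (hc0 : 0 ≤ c 0) (A : ℝ) (hA : 0 < A)
    (hb : ∀ k : ℕ, 1 ≤ k → A * (k : ℝ) ≤ c k) (k : ℕ) :
    min A 1 * (1 + (k : ℝ)) ≤ 1 + c k := by
  have h1 : min A 1 ≤ 1 := min_le_right _ _
  have h2 : min A 1 ≤ A := min_le_left _ _
  rcases Nat.eq_zero_or_pos k with h | h
  · subst h
    simp only [Nat.cast_zero]
    linarith
  · have := hb k h
    have hk : (0 : ℝ) ≤ k := Nat.cast_nonneg k
    nlinarith

theorem aux_term_s15 (x : ℝ) (a t y : ℝ) (k : ℕ) (hx : x = t * a) (h0 : 0 < a) (ht : 0 < t)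
    (h : a * (1 + (k : ℝ)) ≤ y) :
    (1 + (k : ℝ)) ^ 2 * Real.exp (-2 * t * y) ≤
      (2 * Real.exp (-x) ^ 2) * (((k + 2).choose 2 : ℕ) * Real.exp (-x) ^ k) := by
  have hk : (0 : ℝ) ≤ k := Nat.cast_nonneg k
  have e : Real.exp (-2 * t * y) ≤ Real.exp (-x) ^ 2 * Real.exp (-x) ^ k := by
    rw [← pow_add, ← Real.exp_nat_mul]
    apply Real.exp_le_exp.mpr
    push_cast
    have h3 : t * (a * (1 + (k : ℝ))) ≤ t * y := by gcongr
    have h4 : 0 ≤ t * a * k := by positivity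
    subst hx
    nlinarith
  have hc : (1 + (k : ℝ)) ^ 2 ≤ 2 * ((k + 2).choose 2 : ℕ) := by
    rw [Nat.cast_choose_two]
    push_cast
    nlinarith
  calc _ ≤ (2 * ((k + 2).choose 2 : ℕ)) * (Real.exp (-x) ^ 2 * Real.exp (-x) ^ k) := by gcongr
    _ = _ := by ring

theorem aux_sum_s15 (c : ℕ → ℝ) (hc0 : 0 ≤ c 0) (A : ℝ) (hA : 0 < A)
    (hb : ∀ k : ℕ, 1 ≤ k → A * (k : ℝ) ≤ c k) (t : ℝ) (ht : 0 < t) :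
    Summable (fun k : ℕ => (1 + (k : ℝ)) ^ 2 * Real.exp (-2 * t * (1 + c k))) ∧
    ∑' k : ℕ, (1 + (k : ℝ)) ^ 2 * Real.exp (-2 * t * (1 + c k)) ≤
      (2 * Real.exp (-(t * min A 1)) ^ 2) * (1 / (1 - Real.exp (-(t * min A 1))) ^ 3) := by
  have ha : 0 < min A 1 := lt_min hA one_pos
  have hx : 0 < t * min A 1 := by positivity
  have hr : ‖Real.exp (-(t * min A 1))‖ < 1 := by
    rw [Real.norm_eq_abs, abs_of_pos (Real.exp_pos _)]
    exact Real.exp_lt_one_iff.mpr (by linarith)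
  have hs := (hasSum_choose_mul_geometric_of_norm_lt_one 2 hr).mul_left
    (2 * Real.exp (-(t * min A 1)) ^ 2)
  have hle := fun k => aux_term_s15 _ _ t _ k rfl ha ht (aux_le c hc0 A hA hb k)
  have hsm : Summable (fun k : ℕ => (1 + (k : ℝ)) ^ 2 * Real.exp (-2 * t * (1 + c k))) :=
    Summable.of_nonneg_of_le (fun k => by positivity) hle hs.summable
  exact ⟨hsm, hasSum_le hle hsm.hasSum hs⟩

theorem sup_t_pow_mul_sum_lt_top_iff (c : ℕ → ℝ) (hc0 : 0 ≤ c 0) (A B : ℝ)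
    (hA : 0 < A) (hAB : A ≤ B)
    (hbound : ∀ k : ℕ, 1 ≤ k → A * (k : ℝ) ≤ c k ∧ c k ≤ B * (k : ℝ)) (s : ℝ) :
    (∃ M : ℝ, ∀ t : ℝ, 0 < t →
      t ^ s * ∑' k : ℕ, (1 + (k : ℝ)) ^ 2 * Real.exp (-2 * t * (1 + c k)) ≤ M) ↔
    3 ≤ s := by
  have hB : 0 < B := hA.trans_le hAB
  constructor
  · rintro ⟨M, hM⟩
    by_contra! hlt
    have key : ∀ n : ℕ, 1 ≤ n → (n : ℝ) ^ (3 - s) ≤ M * Real.exp (2 + 4 * B) := by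
      intro n hn
      have hn0 : (0 : ℝ) < n := by exact_mod_cast hn
      have ht : (0 : ℝ) < (n : ℝ)⁻¹ := by positivity
      have h1 := hM _ ht
      have hsm := (aux_sum_s15 c hc0 A hA (fun k hk => (hbound k hk).1) _ ht).1
      have h2 := hsm.sum_le_tsum (Finset.Ico n (2 * n)) (fun k _ => by positivity)
      have h3 : (n : ℝ) ^ 3 * Real.exp (-(2 + 4 * B)) ≤
          ∑ k ∈ Finset.Ico n (2 * n),
            (1 + (k : ℝ)) ^ 2 * Real.exp (-2 * (n : ℝ)⁻¹ * (1 + c k)) := by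
        have := Finset.card_nsmul_le_sum (Finset.Ico n (2 * n))
          (fun k : ℕ => (1 + (k : ℝ)) ^ 2 * Real.exp (-2 * (n : ℝ)⁻¹ * (1 + c k)))
          ((n : ℝ) ^ 2 * Real.exp (-(2 + 4 * B))) (by
            intro k hk
            rw [Finset.mem_Ico] at hk
            have hk1 : (n : ℝ) ≤ k := by exact_mod_cast hk.1
            have hk2 : (k : ℝ) ≤ 2 * n := by exact_mod_cast hk.2.le
            have hck := (hbound k (hn.trans hk.1)).2
            have h5 : (n : ℝ)⁻¹ * (1 + c k) ≤ 1 + 2 * B := by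
              rw [inv_mul_le_iff₀ hn0]
              have : (1 : ℝ) ≤ n := by exact_mod_cast hn
              nlinarith
            gcongr
            · linarith
            · linarith)
        rw [Nat.card_Ico, nsmul_eq_mul, show 2 * n - n = n by omega] at this
        calc _ = (n : ℝ) * ((n : ℝ) ^ 2 * Real.exp (-(2 + 4 * B))) := by ring
          _ ≤ _ := this
      have h4 : ((n : ℝ)⁻¹) ^ s * ((n : ℝ) ^ 3 * Real.exp (-(2 + 4 * B))) ≤ M :=
        le_trans (by gcongr; exact h3.trans h2) h1
      have h6 : ((n : ℝ)⁻¹) ^ s * (n : ℝ) ^ 3 = (n : ℝ) ^ (3 - s) := by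
        rw [Real.inv_rpow hn0.le, Real.rpow_sub hn0, div_eq_inv_mul]
        norm_cast
      rw [← mul_assoc, h6, Real.exp_neg, ← div_eq_mul_inv, div_le_iff₀ (Real.exp_pos _)] at h4
      exact h4
    have ht := (tendsto_rpow_atTop (sub_pos.mpr hlt)).comp (tendsto_natCast_atTop_atTop (R := ℝ))
    obtain ⟨n, hn1, hn2⟩ := ((ht.eventually_gt_atTop (M * Real.exp (2 + 4 * B))).and
      (Filter.eventually_ge_atTop 1)).exists
    exact absurd (key n hn2) (not_le.mpr hn1)
  · intro hs
    set a := min A 1 with hadef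
    have ha : 0 < a := lt_min hA one_pos
    obtain ⟨n, hn⟩ := exists_nat_ge (s - 3)
    refine ⟨2 / a ^ 3 * (6 * Real.exp 1) * (1 + n.factorial / a ^ n), fun t ht => ?_⟩
    have h1 := (aux_sum_s15 c hc0 A hA (fun k hk => (hbound k hk).1) t ht).2
    rw [← hadef] at h1
    set x := t * a with hxdef
    have hx : 0 < x := by positivity
    have hE : Real.exp (-x) * Real.exp x = 1 := by rw [← Real.exp_add]; simp
    have hEp := Real.exp_pos (-x)
    have hr : x / (1 + x) ≤ 1 - Real.exp (-x) := by
      rw [div_le_iff₀ (by positivity)]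
      nlinarith [Real.add_one_le_exp x]
    have h2 : 1 / (1 - Real.exp (-x)) ^ 3 ≤ (1 + x) ^ 3 / x ^ 3 := by
      calc _ ≤ 1 / (x / (1 + x)) ^ 3 := by gcongr
        _ = _ := by field_simp
    have h3 : (1 + x) ^ 3 * Real.exp (-x) ≤ 6 * Real.exp 1 := by
      have := Real.pow_div_factorial_le_exp (1 + x) (by positivity) 3
      rw [Real.exp_add, div_le_iff₀ (by positivity)] at this
      norm_num [Nat.factorial] at this
      calc _ ≤ (Real.exp 1 * Real.exp x * 6) * Real.exp (-x) := by gcongr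
        _ = 6 * Real.exp 1 * (Real.exp (-x) * Real.exp x) := by ring
        _ = _ := by rw [hE, mul_one]
    have h4 : t ^ (s - 3) * Real.exp (-x) ≤ 1 + n.factorial / a ^ n := by
      have hp : t ^ (s - 3) ≤ 1 + t ^ n := by
        rcases le_total t 1 with h | h
        · have := Real.rpow_le_one ht.le h (sub_nonneg.mpr hs)
          have : 0 < t ^ n := by positivity
          linarith
        · have := Real.rpow_le_rpow_of_exponent_le h hn
          rw [Real.rpow_natCast] at this
          linarith
      have hq : t ^ n * Real.exp (-x) ≤ n.factorial / a ^ n := by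
        have := Real.pow_div_factorial_le_exp x hx.le n
        rw [div_le_iff₀ (by positivity)] at this
        rw [le_div_iff₀ (by positivity)]
        calc _ = x ^ n * Real.exp (-x) := by rw [hxdef, mul_pow]; ring
          _ ≤ (Real.exp x * n.factorial) * Real.exp (-x) := by gcongr
          _ = n.factorial * (Real.exp (-x) * Real.exp x) := by ring
          _ = _ := by rw [hE, mul_one]
      have h1e : Real.exp (-x) ≤ 1 := Real.exp_le_one_iff.mpr (by linarith)
      nlinarith
    have h5 : t ^ s = t ^ (s - 3) * t ^ 3 := by
      rw [← Real.rpow_natCast, ← Real.rpow_add ht]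
      norm_num
    calc _ ≤ t ^ s * ((2 * Real.exp (-x) ^ 2) * ((1 + x) ^ 3 / x ^ 3)) := by
          gcongr
          exact h1.trans (by gcongr)
      _ = 2 / a ^ 3 * ((1 + x) ^ 3 * Real.exp (-x)) * (t ^ (s - 3) * Real.exp (-x)) := by
          rw [h5]
          have : x ^ 3 = t ^ 3 * a ^ 3 := by rw [hxdef]; ring
          rw [this]
          field_simp
      _ ≤ _ := by gcongr
end
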